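/- arXiv:2510.00987 — 12 statements merged into one kernel-verified Lean document; each statement's English description precedes it below -/
import Mathlib

section
/- Let U be a regular open subset of ℝ (i.e. U = interior(closure U)) with the usual topology. Then U ∪ {0} = ⋂_{n ∈ ℕ, n ≥ 1} interior(closure(U) ∪ [-1/n, 1/n]). -/
/-!
For closed `F`, removing `F` from the open set `interior (A ∪ F)` leaves an open subset of `A`, so
`interior (A ∪ F) ⊆ interior A ∪ F`. If `F` runs over a basis of closed neighbourhoods of a point
`x` of a T₁ space, then intersecting over `F` shrinks the second term to `{x}`.
-/

open Set Topology

section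

variable {X : Type*} {ι : Sort*} [TopologicalSpace X] {p : ι → Prop} {F : ι → Set X}

theorem biInter_interior_union_subset (A : Set X) (hF : ∀ i, p i → IsClosed (F i)) :
    ⋂ (i) (_ : p i), interior (A ∪ F i) ⊆ interior A ∪ ⋂ (i) (_ : p i), F i := by
  rw [union_iInter₂]
  exact iInter₂_mono fun i hi ↦ (hF i hi).interior_union_right

theorem union_zero_eq_iInter_interior_closure_union_Icc_general [T1Space X] {x : X}
    (hx : (𝓝 x).HasBasis p F) (hF : ∀ i, p i → IsClosed (F i)) (A : Set X) :
    interior A ∪ {x} = ⋂ (i) (_ : p i), interior (A ∪ F i) := by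
  apply Subset.antisymm
  · refine subset_iInter₂ fun i hi ↦ union_subset (interior_mono subset_union_left) ?_
    have hx_mem : x ∈ interior (F i) := mem_interior_iff_mem_nhds.mpr (hx.mem_of_mem hi)
    exact singleton_subset_iff.mpr (interior_mono subset_union_right hx_mem)
  · rw [← biInter_basis_nhds hx]
    exact biInter_interior_union_subset A hF

end

/-- Let U be a regular open subset of ℝ (i.e. `U = interior (closure U)`)
with the usual topology. Then
`U ∪ {0} = ⋂_{n ∈ ℕ, n ≥ 1} interior (closure U ∪ [-1/n, 1/n])`. -/
theorem union_zero_eq_iInter_interior_closure_union_Icc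
    (U : Set ℝ) (hU : U = interior (closure U)) :
    U ∪ {0} =
      ⋂ (n : ℕ) (_ : 1 ≤ n),
        interior (closure U ∪ Set.Icc (-(1 / (n : ℝ))) (1 / (n : ℝ))) := by
  simpa only [← hU, Real.closedBall_eq_Icc, zero_sub, zero_add, Order.one_le_iff_pos] using
    union_zero_eq_iInter_interior_closure_union_Icc_general
      (Metric.nhds_basis_closedBall_inv_nat_pos (x := (0 : ℝ)))
      (fun _ _ ↦ Metric.isClosed_closedBall) (closure U)
end

section
/- Let U be a regular open subset of ℝ with the usual topology. Then U ∪ {0} = ⋂_{n ∈ ℕ, n ≥ 1} interior(closure(U ∪ (-1/n, 1/n))). -/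
/-!
Outside `closure V`, the sets `closure (U ∪ V)` and `closure U` agree, so
`interior (closure (U ∪ V)) ⊆ interior (closure U) ∪ closure V`. As `V` runs through a neighbourhood
basis of a point in a Hausdorff space, the sets `closure V` shrink to that point.
-/

open Topology

section TopologicalSpace

variable {X : Type*} [TopologicalSpace X]

theorem interior_closure_union_subset (U V : Set X) :
    interior (closure (U ∪ V)) ⊆ interior (closure U) ∪ closure V := by
  intro y hy
  by_cases hyV : y ∈ closure V
  · exact Or.inr hyV
  · left
    have hsdiff : interior (closure (U ∪ V)) \ closure V ⊆ closure U := by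
      rw [Set.sdiff_subset_iff, Set.union_comm, ← closure_union]
      exact interior_subset
    exact interior_maximal hsdiff (isOpen_interior.sdiff isClosed_closure) ⟨hy, hyV⟩

variable [T2Space X] {ι : Sort*} {p : ι → Prop} {s : ι → Set X} {x : X}

theorem biInter_closure_basis_nhds (hs : (𝓝 x).HasBasis p s) :
    ⋂ (i) (_ : p i), closure (s i) = {x} := by
  refine Set.Subset.antisymm (fun y hy ↦ ?_) (Set.singleton_subset_iff.2 <|
    Set.mem_iInter₂.2 fun i hi ↦ subset_closure (mem_of_mem_nhds (hs.mem_of_mem hi)))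
  by_contra hyx
  obtain ⟨i, hi, hiy⟩ := hs.disjoint_iff_left.1 (disjoint_nhds_nhds.2 (Ne.symm hyx))
  rw [← mem_interior_iff_mem_nhds, interior_compl] at hiy
  exact hiy (Set.mem_iInter₂.1 hy i hi)

theorem union_zero_eq_iInter_interior_closure_union_Ioo_general (U : Set X)
    (hs : (𝓝 x).HasBasis p s) :
    interior (closure U) ∪ {x} = ⋂ (i) (_ : p i), interior (closure (U ∪ s i)) := by
  apply Set.Subset.antisymm
  · refine Set.subset_iInter₂ fun i hi ↦ Set.union_subset ?_ (Set.singleton_subset_iff.2 ?_)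
    · exact interior_mono (closure_mono Set.subset_union_left)
    · exact mem_interior_iff_mem_nhds.2 <| Filter.mem_of_superset (hs.mem_of_mem hi) <|
        Set.subset_union_right.trans subset_closure
  · calc ⋂ (i) (_ : p i), interior (closure (U ∪ s i))
      _ ⊆ ⋂ (i) (_ : p i), (interior (closure U) ∪ closure (s i)) :=
        Set.iInter₂_mono fun i _ ↦ interior_closure_union_subset U (s i)
      _ = interior (closure U) ∪ {x} := by
        rw [← Set.union_iInter₂, biInter_closure_basis_nhds hs]

end TopologicalSpace

theorem Ioo_neg_one_div_nat_hasBasis_nhds_zero :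
    (𝓝 (0 : ℝ)).HasBasis (fun n : ℕ ↦ 1 ≤ n)
      fun n ↦ Set.Ioo (-(1 / (n : ℝ))) (1 / (n : ℝ)) := by
  simp only [← Real.ball_zero_eq_Ioo]
  exact Metric.nhds_basis_ball_inv_nat_pos

/-- Let U be a regular open subset of ℝ with the usual topology. Then
`U ∪ {0} = ⋂_{n ∈ ℕ, n ≥ 1} interior (closure (U ∪ (-1/n, 1/n)))`. -/
theorem union_zero_eq_iInter_interior_closure_union_Ioo
    (U : Set ℝ) (hU : U = interior (closure U)) :
    U ∪ {0} =
      ⋂ (n : ℕ) (_ : 1 ≤ n),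
        interior (closure (U ∪ Set.Ioo (-(1 / (n : ℝ))) (1 / (n : ℝ)))) := by
  rw [← union_zero_eq_iInter_interior_closure_union_Ioo_general U
    Ioo_neg_one_div_nat_hasBasis_nhds_zero, ← hU]
end

section
/- For every open set U ⊆ ℝ and every regular open set V ⊆ ℝ with U ⊆ V, there exists a sequence of pairs (Uₙ, Vₙ)_{n ≥ 1} with each Uₙ open in ℝ, each Vₙ regular open in ℝ, Uₙ ⊆ Vₙ, ((-1/n,1/n) \ {0}) ⊆ Uₙ and (-1/n,1/n) ⊆ Vₙ for all n, such that interior(⋂ₙ Uₙ) = U and interior(⋂ₙ Vₙ) = V. (Indeed one may take Uₙ = ((-1/n,1/n) \ {0}) ∪ U and Vₙ = interior(closure((-1/n,1/n) ∪ V)).) -/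
/-!
Let `I` be a family of open sets whose closures meet in a set `D` with empty interior; for the
intervals `(-1/n, 1/n)` this is `D = {0}`. Take `Uᵢ = (Iᵢ \ D) ∪ U` and
`Vᵢ = interior (closure (Iᵢ ∪ V))`. Binary unions distribute over intersections, so `⋂ Uᵢ = U`,
since the sets `Iᵢ \ D` have no common point, while `⋂ Vᵢ` lies in `closure V ∪ D`. The latter has
the same interior as `closure V` because `closure V` is closed and `D` has empty interior.
-/

open Set

section Families

variable {X ι : Type*} {s : Set ι} {I : ι → Set X}

theorem biInter_sdiff_union_eq {D : Set X} (hs : s.Nonempty) (hD : ⋂ i ∈ s, I i ⊆ D) (U : Set X) :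
    ⋂ i ∈ s, (I i \ D ∪ U) = U := by
  have hempty : ⋂ i ∈ s, I i \ D = ∅ := by
    simp only [sdiff_eq]
    rw [biInter_inter hs, ← sdiff_eq, sdiff_eq_empty]
    exact hD
  rw [← iInter₂_union, hempty, empty_union]

variable [TopologicalSpace X]

theorem interior_biInter_interior_closure_union_eq
    (hI : interior (⋂ i ∈ s, closure (I i)) = ∅) (V : Set X) :
    interior (⋂ i ∈ s, interior (closure (I i ∪ V))) = interior (closure V) := by
  apply Subset.antisymm
  · calc interior (⋂ i ∈ s, interior (closure (I i ∪ V)))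
      _ ⊆ interior (⋂ i ∈ s, (closure V ∪ closure (I i))) :=
        interior_mono <| iInter₂_mono fun i _ ↦
          interior_subset.trans_eq (by rw [closure_union, union_comm])
      _ = interior (closure V ∪ ⋂ i ∈ s, closure (I i)) := by rw [union_iInter₂]
      _ = interior (closure V) := interior_union_isClosed_of_interior_empty isClosed_closure hI
  · exact interior_maximal
      (subset_iInter₂ fun i _ ↦ interior_mono (closure_mono subset_union_right)) isOpen_interior

theorem exists_sequence_of_pairs_inf_eq_general {D U V : Set X} (hs : s.Nonempty)
    (hI : ∀ i ∈ s, IsOpen (I i)) (hID : ⋂ i ∈ s, closure (I i) = D) (hD : interior D = ∅)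
    (hU : IsOpen U) (hV : V = interior (closure V)) (hUV : U ⊆ V) :
    ∃ Us Vs : ι → Set X,
      (∀ i ∈ s, IsOpen (Us i)) ∧
      (∀ i ∈ s, Vs i = interior (closure (Vs i))) ∧
      (∀ i ∈ s, Us i ⊆ Vs i) ∧
      (∀ i ∈ s, I i \ D ⊆ Us i) ∧
      (∀ i ∈ s, I i ⊆ Vs i) ∧
      interior (⋂ i ∈ s, Us i) = U ∧
      interior (⋂ i ∈ s, Vs i) = V := by
  have hDclosed : IsClosed D := hID ▸ isClosed_biInter fun _ _ ↦ isClosed_closure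
  have hVopen : IsOpen V := hV ▸ isOpen_interior
  have hinter : ⋂ i ∈ s, I i ⊆ D := hID ▸ iInter₂_mono fun _ _ ↦ subset_closure
  have hIV : ∀ i ∈ s, I i ∪ V ⊆ interior (closure (I i ∪ V)) := fun i hi ↦
    ((hI i hi).union hVopen).subset_interior_closure
  refine ⟨fun i ↦ I i \ D ∪ U, fun i ↦ interior (closure (I i ∪ V)),
    fun i hi ↦ ((hI i hi).sdiff hDclosed).union hU,
    fun _ _ ↦ interior_closure_idem.symm,
    fun i hi ↦ (union_subset_union sdiff_subset hUV).trans (hIV i hi),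
    fun _ _ ↦ subset_union_left,
    fun i hi ↦ subset_union_left.trans (hIV i hi), ?_, ?_⟩
  · rw [biInter_sdiff_union_eq hs hinter, hU.interior_eq]
  · rw [interior_biInter_interior_closure_union_eq (hID ▸ hD), ← hV]

end Families

section Intervals

variable {K : Type*} [Field K] [LinearOrder K] [IsStrictOrderedRing K]

theorem biInter_Icc_neg_one_div_one_div [Archimedean K] :
    ⋂ n ∈ Ici (1 : ℕ), Icc (-(1 / (n : K))) (1 / (n : K)) = {0} := by
  ext x
  simp only [mem_iInter₂, mem_Ici, mem_Icc, ← abs_le, mem_singleton_iff]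
  refine ⟨fun hx ↦ ?_, fun hx n _ ↦ by simp [hx]⟩
  by_contra hne
  obtain ⟨n, hn⟩ := exists_nat_one_div_lt (abs_pos.mpr hne)
  exact hn.not_ge (mod_cast hx (n + 1) n.succ_pos)

theorem biInter_closure_Ioo_neg_one_div_one_div [Archimedean K] [TopologicalSpace K]
    [OrderTopology K] :
    ⋂ n ∈ Ici (1 : ℕ), closure (Ioo (-(1 / (n : K))) (1 / (n : K))) = {0} := by
  rw [← biInter_Icc_neg_one_div_one_div]
  refine iInter₂_congr fun n hn ↦ closure_Ioo ?_
  have hpos : 0 < 1 / (n : K) := one_div_pos.2 (Nat.cast_pos.2 hn)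
  exact (neg_lt_self hpos).ne

end Intervals

/-- For every open set `U ⊆ ℝ` and every regular open set `V ⊆ ℝ` with
`U ⊆ V`, there exists a sequence of pairs `(Uₙ, Vₙ)` (for `n ≥ 1`) with each `Uₙ` open
in ℝ, each `Vₙ` regular open in ℝ, `Uₙ ⊆ Vₙ`, `((-1/n, 1/n) \ {0}) ⊆ Uₙ` and
`(-1/n, 1/n) ⊆ Vₙ` for all `n`, such that `interior (⋂ₙ Uₙ) = U` and
`interior (⋂ₙ Vₙ) = V`. -/
theorem exists_sequence_of_pairs_inf_eq
    (U V : Set ℝ) (hU : IsOpen U) (hV : V = interior (closure V)) (hUV : U ⊆ V) :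
    ∃ Us Vs : ℕ → Set ℝ,
      (∀ n, 1 ≤ n → IsOpen (Us n)) ∧
      (∀ n, 1 ≤ n → Vs n = interior (closure (Vs n))) ∧
      (∀ n, 1 ≤ n → Us n ⊆ Vs n) ∧
      (∀ n : ℕ, 1 ≤ n → Set.Ioo (-(1 / (n : ℝ))) (1 / (n : ℝ)) \ {0} ⊆ Us n) ∧
      (∀ n : ℕ, 1 ≤ n → Set.Ioo (-(1 / (n : ℝ))) (1 / (n : ℝ)) ⊆ Vs n) ∧
      interior (⋂ (n : ℕ) (_ : 1 ≤ n), Us n) = U ∧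
      interior (⋂ (n : ℕ) (_ : 1 ≤ n), Vs n) = V := by
  exact exists_sequence_of_pairs_inf_eq_general (s := Ici 1) nonempty_Ici (fun _ _ ↦ isOpen_Ioo)
    biInter_closure_Ioo_neg_one_div_one_div (interior_singleton 0) hU hV hUV
end

section
/- Let L be a frame. Then S_c(L) is weakly subfit if and only if every proper open sublocale of L is contained in a proper element of S_c(L). Here S_c(L) is weakly subfit means: for every S ∈ S_c(L) with S ≠ {⊤}, there exists T ∈ S_c(L) with T ≠ L and S ⋁ T = L. -/
/-- The join, in the coframe of sublocales of a frame `L`, of a collection `𝒮` of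
sublocales (given as subsets of `L`): it consists of all infima of subsets of `⋃₀ 𝒮`. -/
def Sublocale.join {L : Type*} [Order.Frame L] (𝒮 : Set (Set L)) : Set L :=
  {x | ∃ M : Set L, M ⊆ ⋃₀ 𝒮 ∧ x = sInf M}

/-- The closed sublocale `c(a) = {x ∈ L | a ≤ x}` of a frame `L`. -/
def Sublocale.closed {L : Type*} [Order.Frame L] (a : L) : Set L :=
  {x | a ≤ x}

/-- The open sublocale `o(a) = {a ⇨ b | b ∈ L}` of a frame `L`. -/
def Sublocale.open' {L : Type*} [Order.Frame L] (a : L) : Set L :=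
  {x | ∃ b : L, x = a ⇨ b}

/-- `S_c(L)`: the collection of all joins of families of closed sublocales of `L`. -/
def Sc (L : Type*) [Order.Frame L] : Set (Set L) :=
  {S | ∃ A : Set L, S = Sublocale.join (Sublocale.closed '' A)}

/-! Joins of closed sublocales are joins in Mathlib's coframe `Sublocale L`, where `c(a)` and `o(a)`
are complements. Hence, by distributivity, `c(a) ⊔ T = L` if and only if `o(a) ≤ T`, and `o(a)` is
proper if and only if `c(a)` is nontrivial. It is enough to test weak subfitness on the closed
sublocales, because a nontrivial join of closed sublocales contains a nontrivial one. -/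

section ComplementedFamily

variable {D ι : Type*} [DistribLattice D] [BoundedOrder D] {J : Set D} {c o : ι → D}

theorem forall_exists_codisjoint_iff_of_isCompl (hco : ∀ i, IsCompl (c i) (o i))
    (hcJ : ∀ i, c i ∈ J) (hJ : ∀ S ∈ J, S ≠ ⊥ → ∃ i, c i ≠ ⊥ ∧ c i ≤ S) :
    (∀ S ∈ J, S ≠ ⊥ → ∃ T ∈ J, T ≠ ⊤ ∧ Codisjoint S T) ↔
      ∀ i, o i ≠ ⊤ → ∃ T ∈ J, T ≠ ⊤ ∧ o i ≤ T := by
  constructor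
  · intro subfit i hi
    have hci : c i ≠ ⊥ := fun h => hi (eq_top_of_bot_isCompl (h ▸ hco i))
    obtain ⟨T, hTJ, hT, hcT⟩ := subfit (c i) (hcJ i) hci
    exact ⟨T, hTJ, hT, (hco i).right_le_iff.2 hcT.symm⟩
  · intro cover S hSJ hS
    obtain ⟨i, hi, hiS⟩ := hJ S hSJ hS
    have hoi : o i ≠ ⊤ := fun h => hi (eq_bot_of_isCompl_top (h ▸ hco i))
    obtain ⟨T, hTJ, hT, hoT⟩ := cover i hoi
    exact ⟨T, hTJ, hT, ((hco i).right_le_iff.1 hoT).symm.mono_left hiS⟩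

end ComplementedFamily

theorem sup_inf_himp_eq_right {H : Type*} [GeneralizedHeytingAlgebra H] (a x : H) :
    (a ⊔ x) ⊓ (a ⇨ x) = x := by
  rw [inf_sup_right, inf_himp, inf_eq_left.2 le_himp, sup_eq_right.2 inf_le_right]

section Sublocales

variable {L : Type*} [Order.Frame L]

theorem mem_sublocaleJoin_iff {𝒮 : Set (Set L)} {x : L} :
    x ∈ Sublocale.join 𝒮 ↔ sInf {y ∈ ⋃₀ 𝒮 | x ≤ y} ≤ x := by
  constructor
  · rintro ⟨M, hM, rfl⟩
    exact sInf_le_sInf fun m hm => ⟨hM hm, sInf_le hm⟩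
  · exact fun h => ⟨_, Set.sep_subset _ _, le_antisymm (le_sInf fun _ hy => hy.2) h⟩

theorem sInf_mem_sublocaleJoin {𝒮 : Set (Set L)} {M : Set L} (hM : M ⊆ Sublocale.join 𝒮) :
    sInf M ∈ Sublocale.join 𝒮 := by
  refine mem_sublocaleJoin_iff.2 (le_sInf fun m hm => ?_)
  calc
    sInf {y ∈ ⋃₀ 𝒮 | sInf M ≤ y} ≤ sInf {y ∈ ⋃₀ 𝒮 | m ≤ y} :=
      sInf_le_sInf fun _ hy => ⟨hy.1, (sInf_le hm).trans hy.2⟩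
    _ ≤ m := mem_sublocaleJoin_iff.1 (hM hm)

theorem himp_mem_sublocaleJoin {𝒮 : Set (Set L)} {a x : L}
    (h𝒮 : ∀ S ∈ 𝒮, ∀ s ∈ S, a ⇨ s ∈ S) (hx : x ∈ Sublocale.join 𝒮) :
    a ⇨ x ∈ Sublocale.join 𝒮 := by
  obtain ⟨M, hM, rfl⟩ := hx
  refine ⟨(a ⇨ ·) '' M, ?_, by simp only [sInf_eq_iInf, himp_iInf_eq, iInf_image]⟩
  rintro _ ⟨m, hm, rfl⟩
  obtain ⟨S, hS, hmS⟩ := hM hm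
  exact ⟨S, hS, h𝒮 S hS m hmS⟩

/-- The set `Sublocale.join` of a family of sublocales, bundled as a sublocale in Mathlib's sense;
used to identify it with the supremum in the coframe `Sublocale L`. -/
def joinSublocale (𝒯 : Set (Sublocale L)) : Sublocale L where
  carrier := Sublocale.join ((↑) '' 𝒯)
  sInf_mem' _ := sInf_mem_sublocaleJoin
  himp_mem' _ _ := himp_mem_sublocaleJoin <| by
    rintro _ ⟨T, -, rfl⟩ _ hs
    exact T.himp_mem hs

theorem isLUB_joinSublocale (𝒯 : Set (Sublocale L)) : IsLUB 𝒯 (joinSublocale 𝒯) := by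
  constructor
  · exact fun T hT x hx => ⟨{x}, by simpa using ⟨T, hT, hx⟩, sInf_singleton.symm⟩
  · rintro R hR _ ⟨M, hM, rfl⟩
    refine R.sInf_mem fun m hm => ?_
    obtain ⟨_, ⟨T, hT, rfl⟩, hmT⟩ := hM hm
    exact hR hT hmT

theorem coe_sSup_sublocale (𝒯 : Set (Sublocale L)) :
    (↑(sSup 𝒯) : Set L) = Sublocale.join ((↑) '' 𝒯) :=
  congrArg SetLike.coe ((isLUB_sSup 𝒯).unique (isLUB_joinSublocale 𝒯))

theorem coe_sup_sublocale (S T : Sublocale L) :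
    (↑(S ⊔ T) : Set L) = Sublocale.join {(S : Set L), (T : Set L)} := by
  rw [← sSup_pair, coe_sSup_sublocale, Set.image_pair]

theorem coe_bot_sublocale : ((⊥ : Sublocale L) : Set L) = {⊤} := by
  rw [← sSup_empty, coe_sSup_sublocale]
  simp [Sublocale.join]

theorem coe_top_sublocale : ((⊤ : Sublocale L) : Set L) = Set.univ :=
  let whole : Sublocale L := ⟨Set.univ, fun _ _ => trivial, fun _ _ _ => trivial⟩
  Set.univ_subset_iff.1 (le_top : whole ≤ ⊤)

theorem coe_sublocale_eq_singleton_top_iff {S : Sublocale L} : (S : Set L) = {⊤} ↔ S = ⊥ := by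
  rw [← coe_bot_sublocale, SetLike.coe_set_eq]

theorem coe_sublocale_eq_univ_iff {S : Sublocale L} : (S : Set L) = Set.univ ↔ S = ⊤ := by
  rw [← coe_top_sublocale, SetLike.coe_set_eq]

theorem sublocaleJoin_pair_eq_univ_iff {S T : Sublocale L} :
    Sublocale.join {(S : Set L), (T : Set L)} = Set.univ ↔ Codisjoint S T := by
  rw [← coe_sup_sublocale, coe_sublocale_eq_univ_iff, codisjoint_iff]

/-- The closed sublocale `c(a)`, as an element of Mathlib's coframe `Sublocale L`. -/
def closedSublocale (a : L) : Sublocale L where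
  carrier := Sublocale.closed a
  sInf_mem' _ hM := le_sInf hM
  himp_mem' _ _ hb := le_trans hb le_himp

theorem mem_sublocaleOpen_iff {a x : L} : x ∈ Sublocale.open' a ↔ a ⇨ x = x :=
  ⟨fun ⟨_, hb⟩ => hb ▸ himp_idem, fun h => ⟨x, h.symm⟩⟩

/-- The open sublocale `o(a)`, as an element of Mathlib's coframe `Sublocale L`. -/
def openSublocale (a : L) : Sublocale L where
  carrier := Sublocale.open' a
  sInf_mem' M hM := mem_sublocaleOpen_iff.2 <| by
    simp only [sInf_eq_iInf, himp_iInf_eq]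
    exact biInf_congr fun m hm => mem_sublocaleOpen_iff.1 (hM hm)
  himp_mem' b x hx := mem_sublocaleOpen_iff.2 <| by
    rw [himp_left_comm, mem_sublocaleOpen_iff.1 hx]

theorem coe_openSublocale (a : L) : (openSublocale a : Set L) = Sublocale.open' a := rfl

theorem isCompl_closedSublocale_openSublocale (a : L) :
    IsCompl (closedSublocale a) (openSublocale a) := by
  constructor
  · intro R hRc hRo x hx
    have x_eq_top : x = ⊤ := by
      rw [← mem_sublocaleOpen_iff.1 (hRo hx), himp_eq_top_iff]
      exact hRc hx
    exact x_eq_top ▸ Sublocale.top_mem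
  · intro R hcR hoR x _
    rw [← sup_inf_himp_eq_right a x]
    exact R.inf_mem (hcR (le_sup_left : a ≤ a ⊔ x)) (hoR ⟨x, rfl⟩)

variable (L) in
/-- `S_c(L)` as a set of elements of Mathlib's coframe `Sublocale L`; its image under the coercion
to sets is `Sc L`. -/
def closedJoins : Set (Sublocale L) :=
  Set.range fun A : Set L => sSup (closedSublocale '' A)

theorem Sc_eq_coe_image_closedJoins : Sc L = (↑) '' closedJoins L := by
  have coe_sSup_closed (A : Set L) :
      (↑(sSup (closedSublocale '' A)) : Set L) = Sublocale.join (Sublocale.closed '' A) := by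
    rw [coe_sSup_sublocale, Set.image_image]
    rfl
  ext S
  constructor
  · rintro ⟨A, rfl⟩
    exact ⟨_, ⟨A, rfl⟩, coe_sSup_closed A⟩
  · rintro ⟨_, ⟨A, rfl⟩, rfl⟩
    exact ⟨A, coe_sSup_closed A⟩

theorem closedSublocale_mem_closedJoins (a : L) : closedSublocale a ∈ closedJoins L :=
  ⟨{a}, by simp⟩

theorem exists_closedSublocale_le_of_mem_closedJoins {S : Sublocale L} (hS : S ∈ closedJoins L)
    (hS_bot : S ≠ ⊥) : ∃ a, closedSublocale a ≠ ⊥ ∧ closedSublocale a ≤ S := by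
  obtain ⟨A, rfl⟩ := hS
  obtain ⟨_, ⟨a, ha, rfl⟩, ha_bot⟩ : ∃ C ∈ closedSublocale '' A, C ≠ ⊥ := by
    simpa only [ne_eq, sSup_eq_bot, not_forall, exists_prop] using hS_bot
  exact ⟨a, ha_bot, le_sSup (Set.mem_image_of_mem _ ha)⟩

end Sublocales

/-- Let `L` be a frame. Then `S_c(L)` is weakly subfit (for every
`S ∈ S_c(L)` with `S ≠ {⊤}` there is `T ∈ S_c(L)` with `T ≠ L` and `S ⋁ T = L`)
if and only if every proper open sublocale of `L` is contained in a proper element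
of `S_c(L)`. -/
theorem Sc_weaklySubfit_iff_proper_open_subset_proper_joinClosed
    {L : Type*} [Order.Frame L] :
    (∀ S ∈ Sc L, S ≠ {(⊤ : L)} →
        ∃ T ∈ Sc L, T ≠ (Set.univ : Set L) ∧ Sublocale.join {S, T} = Set.univ) ↔
    (∀ a : L, Sublocale.open' a ≠ (Set.univ : Set L) →
        ∃ T ∈ Sc L, T ≠ (Set.univ : Set L) ∧ Sublocale.open' a ⊆ T) := by
  simp only [Sc_eq_coe_image_closedJoins, Set.forall_mem_image, Set.exists_mem_image, ne_eq,
    sublocaleJoin_pair_eq_univ_iff, coe_sublocale_eq_singleton_top_iff, coe_sublocale_eq_univ_iff,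
    ← coe_openSublocale, SetLike.coe_subset_coe]
  exact forall_exists_codisjoint_iff_of_isCompl isCompl_closedSublocale_openSublocale
    closedSublocale_mem_closedJoins fun _ => exists_closedSublocale_le_of_mem_closedJoins
end

section
/- Let L be a frame. Then every proper open sublocale of L is contained in a proper element of S_c(L) if and only if every proper open sublocale o(a) with o(a) dense (equivalently, with a ⇨ ⊥ = ⊥ in L) is contained in a proper element of S_c(L). -/
/-! If `o(a)` is not dense, its closure `c(aᶜ)` is itself a proper element of `S_c(L)` containing
it, so only the dense open sublocales impose a condition. -/

section

variable {L : Type*} [Order.Frame L]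

theorem sublocaleJoin_singleton_of_sInf_mem {S : Set L} (hS : ∀ M ⊆ S, sInf M ∈ S) :
    Sublocale.join {S} = S := by
  ext x
  constructor
  · rintro ⟨M, hM, rfl⟩
    exact hS M (by simpa only [Set.sUnion_singleton] using hM)
  · intro hx
    exact ⟨{x}, by simpa only [Set.sUnion_singleton, Set.singleton_subset_iff] using hx,
      sInf_singleton.symm⟩

theorem closedSublocale_mem_Sc (a : L) : Sublocale.closed a ∈ Sc L := by
  refine ⟨{a}, ?_⟩
  rw [Set.image_singleton]
  exact (sublocaleJoin_singleton_of_sInf_mem fun _ hM => le_sInf hM).symm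

theorem closedSublocale_eq_univ_iff {a : L} : Sublocale.closed a = Set.univ ↔ a = ⊥ :=
  Set.eq_univ_iff_forall.trans isBot_iff_eq_bot

theorem openSublocale_subset_closedSublocale_iff_disjoint {a b : L} :
    Sublocale.open' a ⊆ Sublocale.closed b ↔ Disjoint b a := by
  constructor
  · intro h
    have hb : b ≤ a ⇨ ⊥ := h ⟨⊥, rfl⟩
    rwa [himp_bot, le_compl_iff_disjoint_right] at hb
  · rintro h _ ⟨c, rfl⟩
    exact h.le_compl_right.trans compl_le_himp

end

/-- Let `L` be a frame. Then every proper open sublocale of `L` is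
contained in a proper element of `S_c(L)` if and only if every proper open *dense*
sublocale `o(a)` (density of `o(a)` being equivalent to `a ⇨ ⊥ = ⊥`) is contained
in a proper element of `S_c(L)`. -/
theorem proper_open_iff_proper_open_dense_subset_proper_joinClosed
    {L : Type*} [Order.Frame L] :
    (∀ a : L, Sublocale.open' a ≠ (Set.univ : Set L) →
        ∃ T ∈ Sc L, T ≠ (Set.univ : Set L) ∧ Sublocale.open' a ⊆ T) ↔
    (∀ a : L, a ⇨ ⊥ = ⊥ → Sublocale.open' a ≠ (Set.univ : Set L) →
        ∃ T ∈ Sc L, T ≠ (Set.univ : Set L) ∧ Sublocale.open' a ⊆ T) := by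
  refine ⟨fun h a _ ha => h a ha, fun h a ha => ?_⟩
  by_cases hdense : a ⇨ ⊥ = ⊥
  · exact h a hdense ha
  · rw [himp_bot] at hdense
    exact ⟨Sublocale.closed aᶜ, closedSublocale_mem_Sc aᶜ,
      closedSublocale_eq_univ_iff.not.mpr hdense,
      openSublocale_subset_closedSublocale_iff_disjoint.mpr disjoint_compl_left⟩
end

section
/- Let K = K(Ω(ℝ)) = {(U,V) : U open in ℝ, V regular open in ℝ, U ⊆ V}, a frame under componentwise order. Then S_c(K) is weakly subfit: for every S ∈ S_c(K) with S ≠ {⊤}, there exists T ∈ S_c(K) with T ≠ K and S ⋁ T = K. -/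
open Set

/-- A subset of ℝ is *regular open* if it equals the interior of its closure. -/
def IsRegOpen (s : Set ℝ) : Prop := s = interior (closure s)

lemma isRegOpen_interior_closure (s : Set ℝ) : IsRegOpen (interior (closure s)) := by
  refine subset_antisymm (interior_maximal subset_closure isOpen_interior) ?_
  have h : closure (interior (closure s)) ⊆ closure s := by
    simpa [closure_closure] using closure_mono (interior_subset (s := closure s))
  exact interior_mono h

lemma isRegOpen_univ : IsRegOpen (univ : Set ℝ) := by
  simp [IsRegOpen]

lemma IsRegOpen.isOpen {s : Set ℝ} (hs : IsRegOpen s) : IsOpen s := by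
  rw [hs]; exact isOpen_interior

lemma isRegOpen_iInter_prop {P : Prop} {V : Set ℝ} (h : IsRegOpen V) :
    IsRegOpen (⋂ _ : P, V) := by
  by_cases hp : P
  · simpa [hp] using h
  · simp [hp, isRegOpen_univ]

lemma isRegOpen_interior_iInter {ι : Sort*} {V : ι → Set ℝ} (h : ∀ i, IsRegOpen (V i)) :
    IsRegOpen (interior (⋂ i, V i)) := by
  refine subset_antisymm (interior_maximal subset_closure isOpen_interior) ?_
  refine interior_maximal (subset_iInter fun i => ?_) isOpen_interior
  have h1 : interior (closure (interior (⋂ i, V i))) ⊆ interior (closure (V i)) :=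
    interior_mono (closure_mono (interior_subset.trans (iInter_subset V i)))
  exact h1.trans (h i).symm.subset

lemma IsRegOpen.inter {s t : Set ℝ} (hs : IsRegOpen s) (ht : IsRegOpen t) :
    IsRegOpen (s ∩ t) := by
  refine subset_antisymm (interior_maximal subset_closure (hs.isOpen.inter ht.isOpen)) ?_
  refine subset_inter ?_ ?_
  · exact (interior_mono (closure_mono inter_subset_left)).trans hs.symm.subset
  · exact (interior_mono (closure_mono inter_subset_right)).trans ht.symm.subset

/-- The frame `K(Ω(ℝ))`: pairs `(U, V)` with `U` open in ℝ, `V` regular open in ℝ and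
`U ⊆ V`, ordered componentwise by inclusion. -/
def KOmegaR : Type := {p : Set ℝ × Set ℝ // IsOpen p.1 ∧ IsRegOpen p.2 ∧ p.1 ⊆ p.2}

namespace KOmegaR

instance : PartialOrder KOmegaR := Subtype.partialOrder _

/-- The top element `(ℝ, ℝ)` of `K(Ω(ℝ))`. -/
def top : KOmegaR := ⟨(univ, univ), isOpen_univ, isRegOpen_univ, subset_rfl⟩

/-- Infima in `K(Ω(ℝ))` are given by `(interior ⋂ᵢ Uᵢ, interior ⋂ᵢ Vᵢ)`. -/
noncomputable def inf (S : Set KOmegaR) : KOmegaR :=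
  ⟨(interior (⋂ p ∈ S, (p : KOmegaR).1.1), interior (⋂ p ∈ S, (p : KOmegaR).1.2)),
    isOpen_interior,
    isRegOpen_interior_iInter fun p => isRegOpen_iInter_prop p.2.2.1,
    interior_mono (iInter₂_mono fun p _ => p.2.2.2)⟩

/-- Suprema in `K(Ω(ℝ))` are given by `(⋃ᵢ Uᵢ, interior (closure (⋃ᵢ Vᵢ)))`. -/
noncomputable def sup (S : Set KOmegaR) : KOmegaR :=
  ⟨(⋃ p ∈ S, (p : KOmegaR).1.1, interior (closure (⋃ p ∈ S, (p : KOmegaR).1.2))),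
    isOpen_biUnion fun p _ => p.2.1,
    isRegOpen_interior_closure _,
    interior_maximal ((iUnion₂_mono fun p _ => p.2.2.2).trans subset_closure)
      (isOpen_biUnion fun p _ => p.2.1)⟩

/-- The binary meet in `K(Ω(ℝ))` is the componentwise intersection. -/
def meet (a b : KOmegaR) : KOmegaR :=
  ⟨(a.1.1 ∩ b.1.1, a.1.2 ∩ b.1.2),
    a.2.1.inter b.2.1, a.2.2.1.inter b.2.2.1,
    inter_subset_inter a.2.2.2 b.2.2.2⟩

/-- The Heyting implication in the frame `K(Ω(ℝ))`:
`a ⇨ b` is the largest `x` with `x ⊓ a ≤ b`. -/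
noncomputable def himp (a b : KOmegaR) : KOmegaR :=
  sup {x : KOmegaR | meet x a ≤ b}

/-- The closed sublocale `c(a) = {x | a ≤ x}` of `K(Ω(ℝ))`. -/
def closedSl (a : KOmegaR) : Set KOmegaR := {x | a ≤ x}

/-- The open sublocale `o(a) = {a ⇨ b | b}` of `K(Ω(ℝ))`. -/
noncomputable def openSl (a : KOmegaR) : Set KOmegaR := {x | ∃ b : KOmegaR, x = himp a b}

/-- The join, in the coframe of sublocales of `K(Ω(ℝ))`, of a collection `𝒮` of
sublocales: it consists of all infima of subsets of `⋃₀ 𝒮`. -/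
noncomputable def slJoin (𝒮 : Set (Set KOmegaR)) : Set KOmegaR :=
  {x | ∃ M : Set KOmegaR, M ⊆ ⋃₀ 𝒮 ∧ x = inf M}

/-- `S_c(K(Ω(ℝ)))`: all joins of families of closed sublocales. -/
noncomputable def Sc : Set (Set KOmegaR) :=
  {S | ∃ A : Set KOmegaR, S = slJoin (closedSl '' A)}

end KOmegaR

/-!
For a point `x` the pair `p = (ℝ ∖ {x}, ℝ)` is a coatom of `K(Ω(ℝ))`, and every `S ≠ {⊤}` contains
one of these. Let `T` be the join of the closed sublocales `c(b)` with `b ≰ p`. A coatom lies in a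
join of sublocales only if it lies in one of them, so `p ∉ T`. On the other hand every `c = (U, V)`
is the meet of elements of `T ∪ {p}`: if `x ∈ U` then `c ∈ T`, and otherwise `c` is the infimum of
`p` and the pairs `(U ∪ N, interior (closure (V ∪ N)))`, where `N` runs over the open neighbourhoods
of `x`. In the first component `p` removes `x`; in the second component the infimum is contained in
`closure V ∪ {x}`, whose interior is that of `closure V`, namely `V`, because `x` is not isolated.
-/

open scoped Topology

section CompleteLattice

variable {L : Type*} [CompleteLattice L]

/-- The join of a family of sublocales of a frame `L`: all infima of subsets of their union. -/
def sublocaleJoin (𝒮 : Set (Set L)) : Set L :=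
  {x | ∃ M : Set L, M ⊆ ⋃₀ 𝒮 ∧ x = sInf M}

variable (L) in
/-- The collection `S_c(L)` of joins of closed sublocales, the closed sublocale `c(a)` being
`Ici a`. -/
def closedSublocaleJoins : Set (Set L) :=
  {S | ∃ A : Set L, S = sublocaleJoin (Ici '' A)}

variable (L) in
/-- Weak subfitness of `S_c(L)`: each of its nonzero elements is joined to the top element `L` by
an element other than `L`. The least element of `S_c(L)` is `{⊤}`. -/
def ClosedSublocaleJoinsWeaklySubfit : Prop :=
  ∀ S ∈ closedSublocaleJoins L, S ≠ {⊤} →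
    ∃ T ∈ closedSublocaleJoins L, T ≠ univ ∧ sublocaleJoin {S, T} = univ

lemma subset_sublocaleJoin {𝒮 : Set (Set L)} {S : Set L} (hS : S ∈ 𝒮) : S ⊆ sublocaleJoin 𝒮 :=
  fun x hx => ⟨{x}, singleton_subset_iff.2 ⟨S, hS, hx⟩, sInf_singleton.symm⟩

lemma mem_sublocaleJoin_Ici {A : Set L} {a b : L} (ha : a ∈ A) (hab : a ≤ b) :
    b ∈ sublocaleJoin (Ici '' A) :=
  subset_sublocaleJoin (mem_image_of_mem _ ha) hab

lemma exists_ne_top_of_sublocaleJoin_ne {A : Set L} (hA : sublocaleJoin (Ici '' A) ≠ {⊤}) :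
    ∃ a ∈ A, a ≠ ⊤ := by
  contrapose! hA
  refine Subset.antisymm ?_ (singleton_subset_iff.2 ⟨∅, empty_subset _, sInf_empty.symm⟩)
  rintro _ ⟨M, hM, rfl⟩
  refine sInf_eq_top.2 fun m hm => ?_
  obtain ⟨_, ⟨a, ha, rfl⟩, ham⟩ := hM hm
  exact top_le_iff.1 (hA a ha ▸ ham)

lemma sInf_mem_of_isCoatom {M : Set L} (hM : IsCoatom (sInf M)) : sInf M ∈ M := by
  by_contra hmem
  refine hM.1 (sInf_eq_top.2 fun m hm => hM.2 m ((sInf_le hm).lt_of_ne ?_))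
  rintro rfl
  exact hmem hm

lemma mem_sUnion_of_isCoatom_of_mem_sublocaleJoin {𝒮 : Set (Set L)} {p : L} (hp : IsCoatom p)
    (hmem : p ∈ sublocaleJoin 𝒮) : p ∈ ⋃₀ 𝒮 := by
  obtain ⟨M, hM, rfl⟩ := hmem
  exact hM (sInf_mem_of_isCoatom hp)

lemma notMem_sublocaleJoin_Ici_compl_Iic {p : L} (hp : IsCoatom p) :
    p ∉ sublocaleJoin (Ici '' (Iic p)ᶜ) := by
  intro hmem
  obtain ⟨_, ⟨b, hb, rfl⟩, hbp⟩ := mem_sUnion_of_isCoatom_of_mem_sublocaleJoin hp hmem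
  exact hb hbp

theorem closedSublocaleJoinsWeaklySubfit_of_isCoatom
    (h : ∀ a : L, a ≠ ⊤ →
      ∃ p, IsCoatom p ∧ a ≤ p ∧ ∀ c, p ⊓ sInf (Ici c \ Iic p) ≤ c) :
    ClosedSublocaleJoinsWeaklySubfit L := by
  rintro _ ⟨A, rfl⟩ hA
  obtain ⟨a, haA, ha⟩ := exists_ne_top_of_sublocaleJoin_ne hA
  obtain ⟨p, hp, hap, hinf⟩ := h a ha
  refine ⟨sublocaleJoin (Ici '' (Iic p)ᶜ), ⟨_, rfl⟩,
    fun huniv => notMem_sublocaleJoin_Ici_compl_Iic hp (huniv ▸ mem_univ p),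
    eq_univ_of_forall fun c => ?_⟩
  by_cases hcp : c ≤ p
  · refine ⟨insert p (Ici c \ Iic p), ?_, ?_⟩
    · rintro b (rfl | ⟨-, hbp⟩)
      · exact ⟨_, Or.inl rfl, mem_sublocaleJoin_Ici haA hap⟩
      · exact ⟨_, Or.inr rfl, mem_sublocaleJoin_Ici hbp le_rfl⟩
    · rw [sInf_insert]
      exact le_antisymm (le_inf hcp (le_sInf fun b hb => hb.1)) (hinf c)
  · exact subset_sublocaleJoin (Or.inr rfl) (mem_sublocaleJoin_Ici hcp le_rfl)

end CompleteLattice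

section Topology

variable {X : Type*} [TopologicalSpace X]

/-- A subset of a topological space is *regular open* if it equals the interior of its closure. -/
def IsRegularOpen (s : Set X) : Prop := s = interior (closure s)

lemma IsRegularOpen.isOpen {s : Set X} (hs : IsRegularOpen s) : IsOpen s := by
  rw [hs]
  exact isOpen_interior

lemma isRegularOpen_interior_closure (s : Set X) : IsRegularOpen (interior (closure s)) :=
  interior_closure_idem.symm

lemma isRegularOpen_univ : IsRegularOpen (univ : Set X) := by
  simp [IsRegularOpen]

lemma isRegularOpen_interior_biInter {ι : Type*} {S : Set ι} {V : ι → Set X}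
    (hV : ∀ i ∈ S, IsRegularOpen (V i)) : IsRegularOpen (interior (⋂ i ∈ S, V i)) := by
  refine Subset.antisymm (interior_maximal subset_closure isOpen_interior)
    (interior_maximal (subset_iInter₂ fun i hi => ?_) isOpen_interior)
  calc interior (closure (interior (⋂ i ∈ S, V i)))
      ⊆ interior (closure (V i)) :=
        interior_mono (closure_mono (interior_subset.trans (biInter_subset_of_mem hi)))
    _ = V i := (hV i hi).symm

lemma mem_insert_closure_of_forall_mem_closure_union [T2Space X] {s : Set X} {x z : X}
    (h : ∀ N : Set X, IsOpen N → x ∈ N → z ∈ closure (s ∪ N)) : z ∈ insert x (closure s) := by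
  refine or_iff_not_imp_left.2 fun hzx => ?_
  obtain ⟨M, N, hM, hN, hzM, hxN, hMN⟩ := t2_separation hzx
  have hzN : z ∉ closure N := disjoint_left.1 (hMN.closure_right hM) hzM
  have hz := h N hN hxN
  rw [closure_union] at hz
  exact hz.resolve_right hzN

lemma interior_insert_of_isClosed {s : Set X} (hs : IsClosed s) (x : X) [(𝓝[≠] x).NeBot] :
    interior (insert x s) = interior s := by
  rw [insert_eq, union_comm, interior_union_isClosed_of_interior_empty hs (interior_singleton x)]

end Topology

/-- The frame `K(Ω(X))` of a topological space `X`: pairs `(U, V)` with `U` open, `V` regular open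
and `U ⊆ V`. It is spelled so that `KOmega ℝ` unfolds to the same type as `KOmegaR`. -/
def KOmega (X : Type*) [TopologicalSpace X] : Type _ :=
  {p : Set X × Set X // IsOpen p.1 ∧ IsRegularOpen p.2 ∧ p.1 ⊆ p.2}

namespace KOmega

variable {X : Type*} [TopologicalSpace X]

instance : PartialOrder (KOmega X) := Subtype.partialOrder _

instance : InfSet (KOmega X) where
  sInf S := ⟨(interior (⋂ p ∈ S, p.1.1), interior (⋂ p ∈ S, p.1.2)),
    isOpen_interior,
    isRegularOpen_interior_biInter fun p _ => p.2.2.1,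
    interior_mono (iInter₂_mono fun p _ => p.2.2.2)⟩

lemma isGLB_sInf (S : Set (KOmega X)) : IsGLB S (sInf S) :=
  ⟨fun _ hp => ⟨interior_subset.trans (biInter_subset_of_mem hp),
      interior_subset.trans (biInter_subset_of_mem hp)⟩,
    fun q hq => ⟨interior_maximal (subset_iInter₂ fun _ hp => (hq hp).1) q.2.1,
      interior_maximal (subset_iInter₂ fun _ hp => (hq hp).2) q.2.2.1.isOpen⟩⟩

instance : CompleteLattice (KOmega X) where
  __ := completeLatticeOfInf (KOmega X) isGLB_sInf
  top := ⟨(univ, univ), isOpen_univ, isRegularOpen_univ, subset_rfl⟩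
  le_top _ := ⟨subset_univ _, subset_univ _⟩

lemma eq_top_iff_forall_mem {p : KOmega X} : p = ⊤ ↔ ∀ x, x ∈ p.1.1 := by
  refine ⟨fun hp x => hp ▸ mem_univ x, fun hp => top_le_iff.1 ?_⟩
  exact ⟨fun x _ => hp x, fun x _ => p.2.2.2 (hp x)⟩

/-- The element `(X ∖ {x}, X)` of `K(Ω(X))` determined by the point `x`. -/
def complPoint [T1Space X] (x : X) : KOmega X :=
  ⟨({x}ᶜ, univ), isOpen_compl_singleton, isRegularOpen_univ, subset_univ _⟩

lemma le_complPoint_iff [T1Space X] {p : KOmega X} {x : X} : p ≤ complPoint x ↔ x ∉ p.1.1 :=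
  ⟨fun h => subset_compl_singleton_iff.1 h.1,
    fun h => ⟨subset_compl_singleton_iff.2 h, subset_univ _⟩⟩

lemma isCoatom_complPoint [T1Space X] (x : X) : IsCoatom (complPoint x) := by
  refine ⟨fun h => eq_top_iff_forall_mem.1 h x rfl, fun p hp => eq_top_iff_forall_mem.2 fun z => ?_⟩
  have hx : x ∈ p.1.1 := not_not.1 (mt le_complPoint_iff.2 hp.not_ge)
  exact (eq_or_ne z x).elim (fun hzx => hzx ▸ hx) fun hzx => hp.le.1 hzx

/-- The join `(U ∪ N, interior (closure (V ∪ N)))` of `(U, V)` with the least element of `K(Ω(X))`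
whose first component contains the open set `N`. -/
def adjoin (c : KOmega X) {N : Set X} (hN : IsOpen N) : KOmega X :=
  ⟨(c.1.1 ∪ N, interior (closure (c.1.2 ∪ N))),
    c.2.1.union hN,
    isRegularOpen_interior_closure _,
    interior_maximal ((union_subset_union_left N c.2.2.2).trans subset_closure) (c.2.1.union hN)⟩

lemma le_adjoin (c : KOmega X) {N : Set X} (hN : IsOpen N) : c ≤ c.adjoin hN :=
  ⟨subset_union_left,
    interior_maximal (subset_union_left.trans subset_closure) c.2.2.1.isOpen⟩

lemma le_of_forall_le_adjoin [T2Space X] {q c : KOmega X} {x : X} [(𝓝[≠] x).NeBot]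
    (hx : x ∉ q.1.1) (h : ∀ (N : Set X) (hN : IsOpen N), x ∈ N → q ≤ c.adjoin hN) : q ≤ c := by
  constructor
  · intro z hz
    have hxz : x ∈ ({z}ᶜ : Set X) := fun hxz => hx (mem_singleton_iff.1 hxz ▸ hz)
    exact ((h _ isOpen_compl_singleton hxz).1 hz).resolve_right (not_not.2 rfl)
  · have hsub : q.1.2 ⊆ insert x (closure c.1.2) := fun z hz =>
      mem_insert_closure_of_forall_mem_closure_union fun N hN hxN =>
        interior_subset ((h N hN hxN).2 hz)
    calc q.1.2 ⊆ interior (insert x (closure c.1.2)) := interior_maximal hsub q.2.2.1.isOpen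
      _ = interior (closure c.1.2) := interior_insert_of_isClosed isClosed_closure x
      _ = c.1.2 := c.2.2.1.symm

lemma complPoint_inf_sInf_le [T2Space X] (x : X) [(𝓝[≠] x).NeBot] (c : KOmega X) :
    complPoint x ⊓ sInf (Ici c \ Iic (complPoint x)) ≤ c := by
  refine le_of_forall_le_adjoin (le_complPoint_iff.1 inf_le_left) fun N hN hxN => ?_
  refine inf_le_right.trans (sInf_le ⟨c.le_adjoin hN, fun hle => ?_⟩)
  exact le_complPoint_iff.1 hle (Or.inr hxN)

end KOmega

theorem Sc_KOmegaR_weaklySubfit_general (X : Type*) [TopologicalSpace X] [T2Space X]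
    [∀ x : X, (𝓝[≠] x).NeBot] : ClosedSublocaleJoinsWeaklySubfit (KOmega X) := by
  refine closedSublocaleJoinsWeaklySubfit_of_isCoatom fun a ha => ?_
  obtain ⟨x, hx⟩ : ∃ x, x ∉ a.1.1 := not_forall.1 (mt KOmega.eq_top_iff_forall_mem.2 ha)
  exact ⟨KOmega.complPoint x, KOmega.isCoatom_complPoint x, KOmega.le_complPoint_iff.2 hx,
    KOmega.complPoint_inf_sInf_le x⟩

/-- `S_c(K(Ω(ℝ)))` is weakly subfit: for every `S ∈ S_c(K)` with
`S ≠ {⊤}` there exists `T ∈ S_c(K)` with `T ≠ K` and `S ⋁ T = K`. -/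
theorem Sc_KOmegaR_weaklySubfit :
    ∀ S ∈ KOmegaR.Sc, S ≠ {KOmegaR.top} →
      ∃ T ∈ KOmegaR.Sc, T ≠ (Set.univ : Set KOmegaR) ∧
        KOmegaR.slJoin {S, T} = Set.univ :=
  Sc_KOmegaR_weaklySubfit_general ℝ
end

section
/- Let L be a weakly subfit frame. Then for every a ∈ L, the pseudocomplement satisfies a* = ⨅ {x ∈ L : x ⊔ a = ⊤}. -/
/-- Weak subfitness, a separation axiom on frames: every element other than `⊥` has join `⊤` with
some element other than `⊤`. Only finite joins occur, so no completeness is assumed. -/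
def WeaklySubfit (L : Type*) [SemilatticeSup L] [BoundedOrder L] : Prop :=
  ∀ a : L, a ≠ ⊥ → ∃ c : L, c ≠ ⊤ ∧ a ⊔ c = ⊤

namespace WeaklySubfit

theorem disjoint_of_mem_lowerBounds {L : Type*} [Lattice L] [BoundedOrder L]
    (hws : WeaklySubfit L) {a b : L} (hb : b ∈ lowerBounds {x : L | x ⊔ a = ⊤}) :
    Disjoint b a := by
  rw [disjoint_iff]
  by_contra hne
  obtain ⟨c, hc, hbac⟩ := hws (b ⊓ a) hne
  have hca : c ⊔ a = ⊤ := by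
    rw [sup_comm]
    exact top_unique (hbac.ge.trans (sup_le_sup_right inf_le_right c))
  have hbc : b ≤ c := hb hca
  exact hc ((sup_eq_right.mpr (inf_le_left.trans hbc)).symm.trans hbac)

theorem lowerBounds_sup_eq_top {L : Type*} [DistribLattice L] [BoundedOrder L]
    (hws : WeaklySubfit L) (a : L) :
    lowerBounds {x : L | x ⊔ a = ⊤} = {x : L | Disjoint x a} := by
  ext b
  refine ⟨hws.disjoint_of_mem_lowerBounds, fun hba x hx => ?_⟩
  exact Disjoint.le_of_codisjoint hba (codisjoint_iff.mpr hx).symm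

end WeaklySubfit

-- `IsGreatest {x | Disjoint x a} p` says that `p` is the pseudocomplement of `a`, which need not
-- exist in a bounded distributive lattice.
theorem weaklySubfit_pseudocomplement_eq_sInf_general
    {L : Type*} [DistribLattice L] [BoundedOrder L] (hws : WeaklySubfit L) (a p : L) :
    IsGreatest {x : L | Disjoint x a} p ↔ IsGLB {x : L | x ⊔ a = ⊤} p := by
  rw [IsGLB, hws.lowerBounds_sup_eq_top]

/-- Let `L` be a weakly subfit frame (for every `a ≠ ⊥` there is `c ≠ ⊤`
with `a ⊔ c = ⊤`). Then for every `a ∈ L` the pseudocomplement `a* = aᶜ = a ⇨ ⊥`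
satisfies `a* = ⨅ {x ∈ L | x ⊔ a = ⊤}`. -/
theorem weaklySubfit_pseudocomplement_eq_sInf
    {L : Type*} [Order.Frame L]
    (hws : ∀ a : L, a ≠ ⊥ → ∃ c : L, c ≠ ⊤ ∧ a ⊔ c = ⊤) (a : L) :
    aᶜ = sInf {x : L | x ⊔ a = ⊤} := by
  have hp : IsGreatest {x : L | Disjoint x a} aᶜ :=
    ⟨disjoint_compl_left, fun _ => le_compl_iff_disjoint_right.mpr⟩
  exact ((weaklySubfit_pseudocomplement_eq_sInf_general hws a aᶜ).mp hp).sInf_eq.symm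
end

section
/- Let L be a weakly subfit frame which is also a coframe (binary joins distribute over arbitrary meets). Then every element of L is complemented: for every a ∈ L, a ⊔ a* = ⊤ (where a* is the pseudocomplement), so L is a Boolean algebra. -/
theorem isLeast_sInf_sup_eq_top {L : Type*} [CompleteLattice L] {a : L}
    (hsup : ∀ s : Set L, a ⊔ sInf s = ⨅ b ∈ s, a ⊔ b) :
    IsLeast {x | a ⊔ x = ⊤} (sInf {x | a ⊔ x = ⊤}) :=
  ⟨(hsup _).trans (iInf₂_eq_top.2 fun _ hx => hx), fun _ => sInf_le⟩

theorem weaklySubfit_coframe_complemented_general {L : Type*} [Lattice L] [BoundedOrder L]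
    (hws : WeaklySubfit L) {a c : L} (hc : IsLeast {x | a ⊔ x = ⊤} c) : IsCompl a c := by
  have hinf : a ⊓ c = ⊥ := by
    by_contra hne
    obtain ⟨d, hd, hsup⟩ := hws _ hne
    have had : a ⊔ d = ⊤ := eq_top_mono (sup_le_sup_right inf_le_left d) hsup
    have hcd : c ≤ d := hc.2 had
    exact hd ((sup_eq_right.2 (inf_le_right.trans hcd)).symm.trans hsup)
  exact .of_eq hinf hc.1

/-- Let `L` be a weakly subfit frame which is also a coframe (binary
joins distribute over arbitrary meets). Then every element of `L` is complemented:
`a ⊔ aᶜ = ⊤` for every `a` (where `aᶜ = a ⇨ ⊥` is the pseudocomplement), so `L` is a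
Boolean algebra. -/
theorem weaklySubfit_coframe_complemented
    {L : Type*} [Order.Frame L]
    (hws : ∀ a : L, a ≠ ⊥ → ∃ c : L, c ≠ ⊤ ∧ a ⊔ c = ⊤)
    (hcoframe : ∀ (a : L) (s : Set L), a ⊔ sInf s = ⨅ b ∈ s, a ⊔ b) :
    ∀ a : L, a ⊔ aᶜ = ⊤ := by
  intro a
  have hcompl :=
    weaklySubfit_coframe_complemented_general hws (isLeast_sInf_sup_eq_top (hcoframe a))
  exact hcompl.compl_eq ▸ hcompl.sup_eq_top
end

section
/- Let K = K(Ω(ℝ)) = {(U,V) : U open in ℝ, V regular open in ℝ, U ⊆ V}. Then the complete lattice S_c(K) is not a coframe: there exist S ∈ S_c(K) and a family (Tᵢ)_{i ∈ I} in S_c(K) such that S ⋁ inf_{S_c}(Tᵢ) ≠ inf_{S_c}(S ⋁ Tᵢ), where inf_{S_c} of a family in S_c(K) is its infimum in S_c(K), namely the largest element of S_c(K) contained in the intersection of the family. -/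
open Set

/-- The infimum, *computed in the complete lattice `S_c(K(Ω(ℝ)))`*, of a family of
elements of `S_c(K(Ω(ℝ)))`: the largest element of `S_c` contained in the intersection
of the family, namely the join of all closed sublocales contained in the intersection. -/
noncomputable def ScInf {ι : Type*} (T : ι → Set KOmegaR) : Set KOmegaR :=
  KOmegaR.slJoin (KOmegaR.closedSl '' {a : KOmegaR | KOmegaR.closedSl a ⊆ ⋂ i, T i})

/-!
Write `e = (∅, ℝ)` and, for each real `q`, `m_q = (ℝ ∖ {q}, ℝ)`, a coatom lying above `e`. Let `T_q`
be the join of all closed sublocales that do not contain `m_q`; it does not contain `m_q` either.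

A closed sublocale contained in every `T_q` contains no `m_q`, so it is `{⊤}`; hence
`c(e) ⋁ inf T_q = c(e)`. On the other hand `c(e) ⋁ T_q` is the whole frame for every `q`: an element
`x` is the infimum of the elements `x ⊔ (W, int cl W)` of `T_q`, with `W` an open neighbourhood of
`q`, together with `m_q` in case `x ≤ m_q`. Only the first coordinate needs `m_q`: if `V` is regular
open, an open set contained in `cl V ∪ {q}` is already contained in `V`.
-/

lemma exists_isOpen_mem_notMem_closure {X : Type*} [TopologicalSpace X] [T2Space X] {p q : X}
    (hpq : p ≠ q) : ∃ W : Set X, IsOpen W ∧ q ∈ W ∧ p ∉ closure W := by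
  obtain ⟨N, W, hN, hW, hpN, hqW, hNW⟩ := t2_separation hpq
  exact ⟨W, hW, hqW, disjoint_left.1 (hNW.closure_right hN) hpN⟩

lemma IsRegOpen.subset_of_inter_dense_subset_closure {U V D : Set ℝ} (hV : IsRegOpen V)
    (hU : IsOpen U) (hD : Dense D) (h : U ∩ D ⊆ closure V) : U ⊆ V := by
  have hUV : U ⊆ closure V :=
    (hD.open_subset_closure_inter hU).trans (closure_minimal h isClosed_closure)
  rw [hV]
  exact interior_maximal hUV hU

namespace KOmegaR

instance : OrderTop KOmegaR where
  top := top
  le_top _ := ⟨subset_univ _, subset_univ _⟩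

lemma isGLB_inf (M : Set KOmegaR) : IsGLB M (inf M) :=
  ⟨fun y hy => ⟨interior_subset.trans (iInter₂_subset y hy),
      interior_subset.trans (iInter₂_subset y hy)⟩,
    fun x hx => ⟨interior_maximal (subset_iInter₂ fun _ hy => (hx hy).1) x.2.1,
      interior_maximal (subset_iInter₂ fun _ hy => (hx hy).2) x.2.2.1.isOpen⟩⟩

lemma mem_slJoin_iff {𝒮 : Set (Set KOmegaR)} {x : KOmegaR} :
    x ∈ slJoin 𝒮 ↔ ∀ z, (∀ s ∈ 𝒮, ∀ y ∈ s, x ≤ y → z ≤ y) → z ≤ x := by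
  constructor
  · rintro ⟨M, hM, rfl⟩ z hz
    refine (isGLB_inf M).2 fun y hy => ?_
    obtain ⟨s, hs, hys⟩ := hM hy
    exact hz s hs y hys ((isGLB_inf M).1 hy)
  · intro h
    refine ⟨{y ∈ ⋃₀ 𝒮 | x ≤ y}, sep_subset _ _, le_antisymm ?_ ?_⟩
    · exact (isGLB_inf _).2 fun _ hy => hy.2
    · exact h _ fun s hs y hys hxy => (isGLB_inf _).1 ⟨mem_sUnion_of_mem hys hs, hxy⟩

lemma subset_slJoin {𝒮 : Set (Set KOmegaR)} {s : Set KOmegaR} (hs : s ∈ 𝒮) : s ⊆ slJoin 𝒮 :=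
  fun x hx => mem_slJoin_iff.2 fun _ hz => hz s hs x hx le_rfl

lemma slJoin_subset_closedSl {𝒮 : Set (Set KOmegaR)} {a : KOmegaR}
    (h : ∀ s ∈ 𝒮, s ⊆ closedSl a) : slJoin 𝒮 ⊆ closedSl a :=
  fun _ hx => mem_slJoin_iff.1 hx a fun s hs _ hy _ => h s hs hy

lemma self_mem_closedSl (a : KOmegaR) : a ∈ closedSl a :=
  le_refl a

lemma closedSl_subset_closedSl {a b : KOmegaR} (h : b ≤ a) : closedSl a ⊆ closedSl b :=
  fun _ => h.trans

lemma closedSl_mem_Sc (a : KOmegaR) : closedSl a ∈ Sc := by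
  refine ⟨{a}, subset_antisymm (subset_slJoin (mem_image_of_mem _ rfl)) ?_⟩
  refine slJoin_subset_closedSl ?_
  rintro _ ⟨_, rfl, rfl⟩
  exact subset_rfl

lemma ScInf_eq_univ {ι : Type*} {T : ι → Set KOmegaR} (h : ∀ i, T i = univ) : ScInf T = univ := by
  refine eq_univ_of_forall fun x => ?_
  have hx : closedSl x ⊆ ⋂ i, T i := subset_iInter fun i => (h i).symm ▸ subset_univ _
  exact subset_slJoin (mem_image_of_mem _ hx) (self_mem_closedSl x)

lemma ScInf_subset_closedSl {ι : Type*} {T : ι → Set KOmegaR} {b : KOmegaR}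
    (h : ∀ a, (∀ i, closedSl a ⊆ T i) → b ≤ a) : ScInf T ⊆ closedSl b := by
  refine slJoin_subset_closedSl ?_
  rintro _ ⟨a, ha, rfl⟩
  exact closedSl_subset_closedSl (h a (subset_iInter_iff.1 ha))

/-- The join of all closed sublocales that do not contain the element `m`. For a coatom `m` it is
the largest element of `S_c(K(Ω(ℝ)))` that does not contain `m`. -/
noncomputable def avoiding (m : KOmegaR) : Set KOmegaR :=
  slJoin (closedSl '' {a | ¬ a ≤ m})

lemma avoiding_mem_Sc (m : KOmegaR) : avoiding m ∈ Sc :=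
  ⟨_, rfl⟩

lemma mem_avoiding_of_not_le {m y : KOmegaR} (h : ¬ y ≤ m) : y ∈ avoiding m :=
  subset_slJoin (mem_image_of_mem _ h) (self_mem_closedSl y)

lemma notMem_avoiding_of_isCoatom {m : KOmegaR} (hm : IsCoatom m) : m ∉ avoiding m := by
  intro h
  refine hm.1 (top_le_iff.1 (mem_slJoin_iff.1 h ⊤ ?_))
  rintro _ ⟨a, ha, rfl⟩ y hay hmy
  have hlt : m < y := lt_of_le_not_ge hmy fun hym => ha (hay.trans hym)
  exact (hm.2 y hlt).ge

lemma not_le_of_closedSl_subset_avoiding {a m : KOmegaR} (hm : IsCoatom m)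
    (h : closedSl a ⊆ avoiding m) : ¬ a ≤ m :=
  fun ham => notMem_avoiding_of_isCoatom hm (h ham)

/-- The element `(∅, ℝ)`, the least dense element of the frame `K(Ω(ℝ))`. -/
def leastDense : KOmegaR :=
  ⟨(∅, univ), isOpen_empty, isRegOpen_univ, empty_subset _⟩

lemma leastDense_le_iff {x : KOmegaR} : leastDense ≤ x ↔ x.1.2 = univ :=
  ⟨fun h => univ_subset_iff.1 h.2, fun h => ⟨empty_subset _, h.ge⟩⟩

lemma closedSl_leastDense_ne_univ : closedSl leastDense ≠ univ := by
  let bottom : KOmegaR := ⟨(∅, ∅), isOpen_empty, by simp [IsRegOpen], subset_rfl⟩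
  intro h
  have hbottom : bottom ∈ closedSl leastDense := h ▸ mem_univ bottom
  exact empty_ne_univ (leastDense_le_iff.1 hbottom)

/-- The element `(ℝ ∖ {q}, ℝ)`, the coatom representing the point `q` of the line. -/
def puncture (q : ℝ) : KOmegaR :=
  ⟨({q}ᶜ, univ), isOpen_compl_singleton, isRegOpen_univ, subset_univ _⟩

lemma leastDense_le_puncture (q : ℝ) : leastDense ≤ puncture q :=
  leastDense_le_iff.2 rfl

lemma le_puncture_iff {x : KOmegaR} {q : ℝ} : x ≤ puncture q ↔ q ∉ x.1.1 :=
  ⟨fun h => subset_compl_singleton_iff.1 h.1,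
    fun h => ⟨subset_compl_singleton_iff.2 h, subset_univ _⟩⟩

lemma eq_top_of_fst_eq_univ {x : KOmegaR} (h : x.1.1 = univ) : x = ⊤ :=
  top_le_iff.1 ⟨h.ge, h.ge.trans x.2.2.2⟩

lemma isCoatom_puncture (q : ℝ) : IsCoatom (puncture q) := by
  refine ⟨fun h => le_puncture_iff.1 h.ge (mem_univ q), fun x hx => eq_top_of_fst_eq_univ ?_⟩
  have hq : q ∈ x.1.1 := not_not.1 fun hq => hx.not_ge (le_puncture_iff.2 hq)
  have hcompl : {q}ᶜ ⊆ x.1.1 := hx.le.1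
  rw [← univ_subset_iff, ← union_compl_self {q}]
  exact union_subset (singleton_subset_iff.2 hq) hcompl

lemma eq_top_of_forall_not_le_puncture {x : KOmegaR} (h : ∀ q, ¬ x ≤ puncture q) : x = ⊤ :=
  eq_top_of_fst_eq_univ (eq_univ_of_forall fun q => not_not.1 fun hq => h q (le_puncture_iff.2 hq))

/-- The join of `x` with the element `(W, int cl W)` given by an open set `W`; used with `W` a small
neighbourhood of a point. -/
noncomputable def adjoin (x : KOmegaR) (W : Set ℝ) (hW : IsOpen W) : KOmegaR :=
  ⟨(x.1.1 ∪ W, interior (closure (x.1.2 ∪ W))), x.2.1.union hW, isRegOpen_interior_closure _,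
    interior_maximal ((union_subset_union_left W x.2.2.2).trans subset_closure)
      (x.2.1.union hW)⟩

lemma le_adjoin (x : KOmegaR) {W : Set ℝ} (hW : IsOpen W) : x ≤ adjoin x W hW :=
  ⟨subset_union_left, interior_maximal (subset_union_left.trans subset_closure) x.2.2.1.isOpen⟩

lemma adjoin_mem_avoiding_puncture (x : KOmegaR) {q : ℝ} {W : Set ℝ} (hW : IsOpen W)
    (hq : q ∈ W) : adjoin x W hW ∈ avoiding (puncture q) :=
  mem_avoiding_of_not_le fun h => le_puncture_iff.1 h (Or.inr hq)

lemma fst_subset_insert_of_forall_le_adjoin {x z : KOmegaR} {q : ℝ}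
    (h : ∀ (W : Set ℝ) (hW : IsOpen W), q ∈ W → z ≤ adjoin x W hW) :
    z.1.1 ⊆ insert q x.1.1 := by
  intro p hp
  refine or_iff_not_imp_left.2 fun hpq => ?_
  obtain ⟨W, hW, hqW, hpW⟩ := exists_isOpen_mem_notMem_closure hpq
  exact ((h W hW hqW).1 hp).resolve_right fun hp' => hpW (subset_closure hp')

lemma snd_subset_of_forall_le_adjoin {x z : KOmegaR} {q : ℝ}
    (h : ∀ (W : Set ℝ) (hW : IsOpen W), q ∈ W → z ≤ adjoin x W hW) :
    z.1.2 ⊆ x.1.2 := by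
  refine x.2.2.1.subset_of_inter_dense_subset_closure z.2.2.1.isOpen (dense_compl_singleton q) ?_
  rintro p ⟨hp, hpq⟩
  obtain ⟨W, hW, hqW, hpW⟩ := exists_isOpen_mem_notMem_closure hpq
  have hcl : p ∈ closure x.1.2 ∪ closure W :=
    closure_union (s := x.1.2) ▸ interior_subset ((h W hW hqW).2 hp)
  exact hcl.resolve_right hpW

lemma le_of_forall_le_adjoin {x z : KOmegaR} {q : ℝ}
    (hpuncture : x ≤ puncture q → z ≤ puncture q)
    (hadjoin : ∀ (W : Set ℝ) (hW : IsOpen W), q ∈ W → z ≤ adjoin x W hW) : z ≤ x := by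
  refine ⟨fun p hp => ?_, snd_subset_of_forall_le_adjoin hadjoin⟩
  rcases fst_subset_insert_of_forall_le_adjoin hadjoin hp with rfl | hpx
  · exact not_not.1 fun hpx => le_puncture_iff.1 (hpuncture (le_puncture_iff.2 hpx)) hp
  · exact hpx

lemma slJoin_pair_avoiding_puncture_eq_univ {S : Set KOmegaR} {q : ℝ} (hS : puncture q ∈ S) :
    slJoin {S, avoiding (puncture q)} = univ := by
  refine eq_univ_of_forall fun x => mem_slJoin_iff.2 fun z hz => ?_
  refine le_of_forall_le_adjoin (q := q) (hz S (mem_insert _ _) _ hS) fun W hW hqW => ?_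
  exact hz _ (mem_insert_of_mem _ rfl) _ (adjoin_mem_avoiding_puncture x hW hqW) (le_adjoin x hW)

lemma ScInf_avoiding_puncture_subset_closedSl_top :
    ScInf (fun q => avoiding (puncture q)) ⊆ closedSl ⊤ :=
  ScInf_subset_closedSl fun _ ha => (eq_top_of_forall_not_le_puncture fun q =>
    not_le_of_closedSl_subset_avoiding (isCoatom_puncture q) (ha q)).ge

end KOmegaR

/-- The complete lattice `S_c(K(Ω(ℝ)))` is not a coframe: there exist
`S ∈ S_c(K)` and a family `(Tᵢ)ᵢ` in `S_c(K)` such that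
`S ⋁ inf_{S_c} Tᵢ ≠ inf_{S_c} (S ⋁ Tᵢ)`. -/
theorem Sc_KOmegaR_not_coframe :
    ∃ S ∈ KOmegaR.Sc, ∃ (ι : Type) (T : ι → Set KOmegaR),
      (∀ i, T i ∈ KOmegaR.Sc) ∧
      KOmegaR.slJoin {S, ScInf T} ≠ ScInf (fun i => KOmegaR.slJoin {S, T i}) := by
  open KOmegaR in
  refine ⟨closedSl leastDense, closedSl_mem_Sc _, ℝ, fun q => avoiding (puncture q),
    fun q => avoiding_mem_Sc _, fun h => closedSl_leastDense_ne_univ ?_⟩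
  have hleft : slJoin {closedSl leastDense, ScInf fun q => avoiding (puncture q)} ⊆
      closedSl leastDense := by
    refine slJoin_subset_closedSl ?_
    rintro _ (rfl | rfl)
    · exact subset_rfl
    · exact ScInf_avoiding_puncture_subset_closedSl_top.trans (closedSl_subset_closedSl le_top)
  have hright : ScInf (fun q => slJoin {closedSl leastDense, avoiding (puncture q)}) = univ :=
    ScInf_eq_univ fun q => slJoin_pair_avoiding_puncture_eq_univ (leastDense_le_puncture q)
  exact univ_subset_iff.1 (hright ▸ h ▸ hleft)
end

section
/- Let X be a topological space. Then X is symmetric (for all x, y ∈ X, if x ∈ closure {y} then y ∈ closure {x}) if and only if every proper open subset of X is contained in a proper union of closed subsets, i.e. for every open U ⊊ X there exists A ∈ U_c(X) with A ≠ X and U ⊆ A. -/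
/-- `U_c(X)`: the collection of all subsets of a topological space `X` that are unions
of (arbitrary families of) closed subsets of `X`. -/
def Uc (X : Type*) [TopologicalSpace X] : Set (Set X) :=
  {A | ∃ 𝒞 : Set (Set X), (∀ C ∈ 𝒞, IsClosed C) ∧ A = ⋃₀ 𝒞}

/-!
Unions of closed sets are exactly the sets stable under specialization. In a symmetric space every
open set is of this kind, so a proper open set already is a proper union of closed sets.
Conversely, suppose `x ∈ closure {y}` but `y ∉ closure {x}`. A union of closed sets containing the
open set `(closure {x})ᶜ` contains `y`, hence `x`, hence `closure {x}`, and so is the whole space.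
-/

open Set

section

variable {X : Type*} [TopologicalSpace X]

theorem mem_Uc_iff_stableUnderSpecialization {A : Set X} :
    A ∈ Uc X ↔ StableUnderSpecialization A := by
  simp only [Uc, mem_ofPred_eq, eq_comm (a := A), stableUnderSpecialization_iff_exists_sUnion_eq]

theorem r0Space_iff_forall_mem_closure_singleton :
    R0Space X ↔ ∀ x y : X, x ∈ closure {y} → y ∈ closure {x} := by
  simp only [← specializes_iff_mem_closure]
  exact ⟨fun _ _ _ hyx ↦ hyx.symm, fun h ↦ ⟨⟨fun x y hxy ↦ h y x hxy⟩⟩⟩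

theorem stableUnderSpecialization_of_stableUnderGeneralization [R0Space X] {U : Set X}
    (hU : StableUnderGeneralization U) : StableUnderSpecialization U :=
  fun _ _ hxy ↦ hU hxy.symm

theorem eq_univ_of_compl_closure_singleton_subset {A : Set X} {x : X}
    (hA : StableUnderSpecialization A) (hxA : x ∈ A) (hsub : (closure {x})ᶜ ⊆ A) :
    A = univ := by
  have closure_subset : closure {x} ⊆ A := fun _ hz ↦
    hA (specializes_iff_mem_closure.2 hz) hxA
  exact eq_univ_of_forall fun z ↦ (em (z ∈ closure {x})).elim (closure_subset ·) (hsub ·)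

theorem r0Space_iff_forall_isOpen_subset_stableUnderSpecialization :
    R0Space X ↔ ∀ U : Set X, IsOpen U → U ≠ univ →
      ∃ A, StableUnderSpecialization A ∧ A ≠ univ ∧ U ⊆ A := by
  constructor
  · intro _ U hU hne
    have hU_stable : StableUnderSpecialization U :=
      stableUnderSpecialization_of_stableUnderGeneralization hU.stableUnderGeneralization
    exact ⟨U, hU_stable, hne, Subset.rfl⟩
  · refine fun h ↦ r0Space_iff_forall_mem_closure_singleton.2 fun x y hxy ↦ ?_
    by_contra hyx
    have hne : (closure {x})ᶜ ≠ univ :=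
      (ne_univ_iff_exists_notMem _).2 ⟨x, notMem_compl_iff.2 (subset_closure rfl)⟩
    obtain ⟨A, hA, hA_ne, hsub⟩ := h _ isClosed_closure.isOpen_compl hne
    have hxA : x ∈ A := hA (specializes_iff_mem_closure.2 hxy) (hsub hyx)
    exact hA_ne (eq_univ_of_compl_closure_singleton_subset hA hxA hsub)

end

/-- A topological space `X` is symmetric (its specialization preorder is
symmetric: `x ∈ closure {y}` implies `y ∈ closure {x}`) if and only if every proper
open subset of `X` is contained in a proper union of closed subsets. -/
theorem symmetric_iff_proper_open_subset_proper_unionClosed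
    {X : Type*} [TopologicalSpace X] :
    (∀ x y : X, x ∈ closure {y} → y ∈ closure {x}) ↔
    (∀ U : Set X, IsOpen U → U ≠ Set.univ →
        ∃ A ∈ Uc X, A ≠ Set.univ ∧ U ⊆ A) := by
  simp only [← r0Space_iff_forall_mem_closure_singleton, mem_Uc_iff_stableUnderSpecialization]
  exact r0Space_iff_forall_isOpen_subset_stableUnderSpecialization
end

section
/- Let X be a topological space. Then every proper open subset of X is contained in a proper union of closed subsets if and only if every proper dense open subset of X is contained in a proper union of closed subsets. (Here 'proper' means ≠ X, and a union of closed subsets is an element of U_c(X).) -/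
section

variable {X : Type*} [TopologicalSpace X]

theorem mem_Uc_of_isClosed {C : Set X} (hC : IsClosed C) : C ∈ Uc X :=
  ⟨{C}, fun _ h ↦ h ▸ hC, (Set.sUnion_singleton C).symm⟩

theorem exists_mem_Uc_ne_univ_superset_of_not_dense {U : Set X} (hU : ¬Dense U) :
    ∃ A ∈ Uc X, A ≠ Set.univ ∧ U ⊆ A :=
  ⟨closure U, mem_Uc_of_isClosed isClosed_closure, mt dense_iff_closure_eq.2 hU, subset_closure⟩

theorem proper_open_iff_proper_dense_open_subset_proper_unionClosed_general
    (p : Set X → Prop) :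
    (∀ U : Set X, p U → U ≠ Set.univ → ∃ A ∈ Uc X, A ≠ Set.univ ∧ U ⊆ A) ↔
      (∀ U : Set X, p U → Dense U → U ≠ Set.univ → ∃ A ∈ Uc X, A ≠ Set.univ ∧ U ⊆ A) := by
  refine ⟨fun h U hU _ hne ↦ h U hU hne, fun h U hU hne ↦ ?_⟩
  by_cases hdense : Dense U
  · exact h U hU hdense hne
  · exact exists_mem_Uc_ne_univ_superset_of_not_dense hdense

end

/-- In a topological space `X`, every proper open subset is contained in
a proper union of closed subsets if and only if every proper *dense* open subset is
contained in a proper union of closed subsets. -/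
theorem proper_open_iff_proper_dense_open_subset_proper_unionClosed
    {X : Type*} [TopologicalSpace X] :
    (∀ U : Set X, IsOpen U → U ≠ Set.univ →
        ∃ A ∈ Uc X, A ≠ Set.univ ∧ U ⊆ A) ↔
    (∀ U : Set X, IsOpen U → Dense U → U ≠ Set.univ →
        ∃ A ∈ Uc X, A ≠ Set.univ ∧ U ⊆ A) :=
  proper_open_iff_proper_dense_open_subset_proper_unionClosed_general IsOpen
end

section
/- Let X be a topological space. Then U_c(X) is weakly subfit (for every A ∈ U_c(X) with A ≠ ∅ there exists B ∈ U_c(X) with B ≠ X and A ∪ B = X) if and only if every proper open subset of X is contained in a proper union of closed subsets, i.e. for every open U ⊊ X there exists A ∈ U_c(X) with A ≠ X and U ⊆ A. -/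
/-!
For a fixed family of candidates `B`, the existence of a proper `B` with `A ∪ B = X` passes from
`A` to larger sets. Every nonempty member of `U_c(X)` contains a nonempty closed set, so weak
subfitness need only be tested on nonempty closed sets `A = X \ U`, where `A ∪ B = X` means `U ⊆ B`.
-/

section

variable {X : Type*} [TopologicalSpace X]

theorem exists_isClosed_subset_of_mem_Uc {A : Set X} (hA : A ∈ Uc X) {x : X} (hx : x ∈ A) :
    ∃ C, IsClosed C ∧ x ∈ C ∧ C ⊆ A := by
  obtain ⟨𝒞, h𝒞, rfl⟩ := hA
  obtain ⟨C, hC, hxC⟩ := hx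
  exact ⟨C, h𝒞 C hC, hxC, Set.subset_sUnion_of_mem hC⟩

theorem forall_mem_Uc_nonempty_iff_forall_isClosed {P : Set X → Prop} (hP : Monotone P) :
    (∀ A ∈ Uc X, A.Nonempty → P A) ↔ ∀ C, IsClosed C → C.Nonempty → P C := by
  refine ⟨fun h C hC ↦ h C (mem_Uc_of_isClosed hC), ?_⟩
  rintro h A hA ⟨x, hx⟩
  obtain ⟨C, hC, hxC, hCA⟩ := exists_isClosed_subset_of_mem_Uc hA hx
  exact hP hCA (h C hC ⟨x, hxC⟩)

theorem forall_mem_Uc_nonempty_iff_forall_isOpen {P : Set X → Prop} (hP : Monotone P) :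
    (∀ A ∈ Uc X, A.Nonempty → P A) ↔ ∀ U, IsOpen U → U ≠ Set.univ → P Uᶜ := by
  rw [forall_mem_Uc_nonempty_iff_forall_isClosed hP, compl_surjective.forall]
  simp only [isClosed_compl_iff, Set.nonempty_compl]

theorem monotone_exists_mem_ne_univ_union_eq_univ {α : Type*} (𝓑 : Set (Set α)) :
    Monotone fun A : Set α ↦ ∃ B ∈ 𝓑, B ≠ Set.univ ∧ A ∪ B = Set.univ := by
  rintro A A' hAA' ⟨B, hB, hBne, hAB⟩
  exact ⟨B, hB, hBne, Set.univ_subset_iff.mp (hAB ▸ Set.union_subset_union_left B hAA')⟩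

end

/-- For a topological space `X`, the lattice `U_c(X)` is weakly subfit
(for every `A ∈ U_c(X)` with `A ≠ ∅` there is `B ∈ U_c(X)` with `B ≠ X` and
`A ∪ B = X`) if and only if every proper open subset of `X` is contained in a proper
union of closed subsets. -/
theorem Uc_weaklySubfit_iff_proper_open_subset_proper_unionClosed
    {X : Type*} [TopologicalSpace X] :
    (∀ A ∈ Uc X, A ≠ (∅ : Set X) →
        ∃ B ∈ Uc X, B ≠ Set.univ ∧ A ∪ B = Set.univ) ↔
    (∀ U : Set X, IsOpen U → U ≠ Set.univ →
        ∃ A ∈ Uc X, A ≠ Set.univ ∧ U ⊆ A) := by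
  simp only [← Set.nonempty_iff_ne_empty]
  rw [forall_mem_Uc_nonempty_iff_forall_isOpen (monotone_exists_mem_ne_univ_union_eq_univ (Uc X))]
  simp only [← Set.compl_subset_iff_union, compl_compl]
end
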